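/- If (C_n)_{n∈ℕ} is a sequence of subsets of Baire space ℕ^ℕ each of which is continuously reducible to Y, then the intersection ⋂_{n∈ℕ} C_n is continuously reducible to Y. -/

import Mathlib

/-- `ℚ` is regarded as carrying the *discrete* topology, so that `N → ℚ` carries the
product topology with discrete factors. -/
instance (priority := high) discreteRatTopology : TopologicalSpace ℚ := ⊥

/-- A rational-valued norm on the ℚ-vector space `N = ℕ →₀ ℚ` of finitely supported
functions from `ℕ` to `ℚ`. -/
structure IsRatNorm (p : (ℕ →₀ ℚ) → ℚ) : Prop where
  nonneg : ∀ v, 0 ≤ p v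
  eq_zero_iff : ∀ v, p v = 0 ↔ v = 0
  smul_eq : ∀ (q : ℚ) (v), p (q • v) = |q| * p v
  add_le : ∀ v w, p (v + w) ≤ p v + p w

/-- The space `X` of pairs `(p, F)` where `p` is a rational norm on `N` and `F` is a
ℚ-linear functional with `|F v| ≤ p v`, topologized as a subspace of
`(N → ℚ) × (N → ℚ)` (with `ℚ` discrete). -/
def Xspace : Type :=
  {pF : ((ℕ →₀ ℚ) → ℚ) × ((ℕ →₀ ℚ) → ℚ) //
    IsRatNorm pF.1 ∧ IsLinearMap ℚ pF.2 ∧ ∀ v, |pF.2 v| ≤ pF.1 v}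

instance : TopologicalSpace Xspace := instTopologicalSpaceSubtype

/-- A sequence in `N` is Cauchy with respect to the rational norm `p`. -/
def IsCauchyWrt (p : (ℕ →₀ ℚ) → ℚ) (v : ℕ → ℕ →₀ ℚ) : Prop :=
  ∀ ε : ℚ, 0 < ε → ∃ K, ∀ m k, K ≤ m → K ≤ k → p (v m - v k) < ε

/-- The set `Y ⊆ X` of pairs `(p, F)` such that `F` attains its norm in the completion of
`(N, p)`: there is a `p`-Cauchy sequence `(v k)` with `p (v k) → 1` and `F (v k) → 1`. -/
def Yset : Set Xspace :=
  {x | ∃ v : ℕ → (ℕ →₀ ℚ), IsCauchyWrt x.val.1 v ∧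
    (∀ ε : ℚ, 0 < ε → ∃ K, ∀ k, K ≤ k → |x.val.1 (v k) - 1| < ε) ∧
    (∀ ε : ℚ, 0 < ε → ∃ K, ∀ k, K ≤ k → |x.val.2 (v k) - 1| < ε)}

/-- A subset `C` of Baire space `ℕ → ℕ` is continuously reducible to `Y`. -/
def ContReducibleToY (C : Set (ℕ → ℕ)) : Prop :=
  ∃ φ : (ℕ → ℕ) → Xspace, Continuous φ ∧ ∀ x, x ∈ C ↔ φ x ∈ Yset
/-! Identify `N` with the finitely supported sequences in `N`, choose positive rational weights
`w n` with sum `1`, and glue points `(p n, F n)` of `X` into the functional `F v = ∑ F n (v n)` and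
the norm `P v = ∑ max (w n * S v) (p n (v n))`, where `S v = ∑ p n (v n)`. Then
`|F| ≤ S ≤ P ≤ 2 * S`. In the plain `ℓ¹` norm `S` the glued functional would attain its norm as
soon as one `F n` does; the maximum penalises every deviation of `p n (v n)` from its share
`w n * S v`. Hence along a sequence with `P` and `F` tending to `1`, both `p n (v n)` and
`F n (v n)` tend to `w n`, so that rescaling the `n`-th entry by `(w n)⁻¹` shows that `F n` attains
its norm. Conversely, if for every `n` vectors `v n j` of norm at most `1` witness that `F n`
attains its norm, then the sequences with entries `w n • v n j` for `n < j` witness it for `F`.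
For fixed `v`, only finitely many values of the `p n` and `F n` enter `P v` and `F v`, so gluing is
continuous. -/

open Filter Topology

section BalancedSum

/-- The sum of `f n (v n)` over `n`, increased by the total amount by which the terms exceed their
`w`-shares of that sum. When `w` is nonnegative with sum `1`, `f` is nonnegative and `f n 0 = 0`,
it equals `∑ max (w n * s) (f n (v n))`, where `s` is the sum of the `f n (v n)`; written in this
way only the indices in the support of `v` contribute. -/
def balancedSum {ι E K : Type*} [Zero E] [Ring K] [LinearOrder K]
    (w : ι → K) (f : ι → E → K) (v : ι →₀ E) : K :=
  v.sum f + v.sum fun n x => max 0 (f n x - w n * v.sum f)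

variable {ι 𝕜 E : Type*}

lemma ratCast_balancedSum [Zero E] (w : ι → ℚ) (f : ι → E → ℚ) (v : ι →₀ E) :
    ((balancedSum w f v : ℚ) : ℝ) =
      balancedSum (fun n => (w n : ℝ)) (fun n x => (f n x : ℝ)) v := by
  simp [balancedSum, Finsupp.sum]

lemma apply_le_finsuppSum [Zero E] {f : ι → E → ℝ} (hzero : ∀ n, f n 0 = 0)
    (hnonneg : ∀ n x, 0 ≤ f n x) (v : ι →₀ E) (k : ι) : f k (v k) ≤ v.sum f := by
  simpa only [Finsupp.sum_single_index (hzero k)] using Finsupp.single_le_sum v (g := f) hnonneg k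

lemma sum_le_balancedSum [Zero E] (w : ι → ℝ) (f : ι → E → ℝ) (v : ι →₀ E) :
    v.sum f ≤ balancedSum w f v :=
  le_add_of_nonneg_right (Finsupp.sum_nonneg' fun _ => le_max_left _ _)

lemma balancedSum_le_of_forall_le [Zero E] {w : ι → ℝ} {f : ι → E → ℝ} {v : ι →₀ E} {c : ℝ}
    (hw0 : ∀ n, 0 ≤ w n) (hw1 : ∀ s : Finset ι, ∑ n ∈ s, w n ≤ 1) (hc : 0 ≤ c)
    (h : ∀ n, f n (v n) ≤ w n * c) : balancedSum w f v ≤ c := by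
  have hsum : v.sum f ≤ c := calc
    v.sum f ≤ ∑ n ∈ v.support, w n * c := Finset.sum_le_sum fun n _ => h n
    _ = (∑ n ∈ v.support, w n) * c := (Finset.sum_mul ..).symm
    _ ≤ c := mul_le_of_le_one_left hc (hw1 _)
  have hexcess : (v.sum fun n x => max 0 (f n x - w n * v.sum f)) ≤ c - v.sum f := calc
    _ ≤ ∑ n ∈ v.support, w n * (c - v.sum f) := Finset.sum_le_sum fun n _ =>
      max_le (mul_nonneg (hw0 n) (sub_nonneg.2 hsum)) (by rw [mul_sub]; gcongr; exact h n)
    _ = (∑ n ∈ v.support, w n) * (c - v.sum f) := (Finset.sum_mul ..).symm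
    _ ≤ c - v.sum f := mul_le_of_le_one_left (sub_nonneg.2 hsum) (hw1 _)
  rw [balancedSum]
  linarith

variable [SeminormedRing 𝕜] [AddCommGroup E] [Module 𝕜 E] {w : ι → ℝ} (p : ι → Seminorm 𝕜 E)

lemma sum_seminorm_nonneg (v : ι →₀ E) : 0 ≤ v.sum fun n => p n :=
  Finsupp.sum_nonneg' fun _ => apply_nonneg _ _

lemma sum_seminorm_add_le (u v : ι →₀ E) :
    ((u + v).sum fun n => p n) ≤ (u.sum fun n => p n) + v.sum fun n => p n := by
  classical
  have hzero : ∀ n ∈ u.support ∪ v.support, p n 0 = 0 := fun n _ => map_zero (p n)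
  rw [Finsupp.sum_of_support_subset _ Finsupp.support_add _ hzero,
    Finsupp.sum_of_support_subset _ Finset.subset_union_left _ hzero,
    Finsupp.sum_of_support_subset _ Finset.subset_union_right _ hzero, ← Finset.sum_add_distrib]
  exact Finset.sum_le_sum fun n _ => map_add_le_add (p n) _ _

lemma sum_seminorm_smul (a : 𝕜) (v : ι →₀ E) :
    ((a • v).sum fun n => p n) = ‖a‖ * v.sum fun n => p n := by
  rw [Finsupp.sum_of_support_subset _ Finsupp.support_smul _ fun n _ => map_zero (p n),
    Finsupp.sum, Finset.mul_sum]
  exact Finset.sum_congr rfl fun n _ => map_smul_eq_mul (p n) _ _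

lemma balancedSum_eq_sum_max (hw0 : ∀ n, 0 ≤ w n) {v : ι →₀ E} {s : Finset ι}
    (hs : v.support ⊆ s) :
    balancedSum w (fun n => p n) v =
      ∑ n ∈ s, max (w n * v.sum fun n => p n) (p n (v n)) +
        (1 - ∑ n ∈ s, w n) * v.sum fun n => p n := by
  have hsplit (a b : ℝ) : max 0 (a - b) = max b a - b := by
    rw [← max_sub_sub_right, sub_self]
  rw [balancedSum, Finsupp.sum_of_support_subset _ hs fun n x => max 0 (p n x - w n * _)]
  · simp only [hsplit, Finset.sum_sub_distrib, ← Finset.sum_mul]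
    ring
  · intro n _
    rw [map_zero, zero_sub]
    exact max_eq_left (neg_nonpos.2 (mul_nonneg (hw0 n) (sum_seminorm_nonneg p v)))

lemma balancedSum_smul (hw0 : ∀ n, 0 ≤ w n) (a : 𝕜) (v : ι →₀ E) :
    balancedSum w (fun n => p n) (a • v) = ‖a‖ * balancedSum w (fun n => p n) v := by
  rw [balancedSum_eq_sum_max p hw0 Finsupp.support_smul,
    balancedSum_eq_sum_max p hw0 subset_rfl, mul_add, Finset.mul_sum]
  simp only [sum_seminorm_smul, Finsupp.smul_apply, map_smul_eq_mul,
    mul_max_of_nonneg _ _ (norm_nonneg a), mul_left_comm]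

lemma balancedSum_add_le (hw0 : ∀ n, 0 ≤ w n) (hw1 : ∀ s : Finset ι, ∑ n ∈ s, w n ≤ 1)
    (u v : ι →₀ E) :
    balancedSum w (fun n => p n) (u + v) ≤
      balancedSum w (fun n => p n) u + balancedSum w (fun n => p n) v := by
  classical
  have hS := sum_seminorm_add_le p u v
  rw [balancedSum_eq_sum_max p hw0 Finsupp.support_add,
    balancedSum_eq_sum_max p hw0 Finset.subset_union_left,
    balancedSum_eq_sum_max p hw0 Finset.subset_union_right, add_add_add_comm,
    ← Finset.sum_add_distrib, ← mul_add]
  refine add_le_add (Finset.sum_le_sum fun n _ => ?_)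
    (mul_le_mul_of_nonneg_left hS (sub_nonneg.2 (hw1 _)))
  refine le_trans (max_le_max ?_ (map_add_le_add (p n) _ _)) max_add_add_le_max_add_max
  rw [← mul_add]
  exact mul_le_mul_of_nonneg_left hS (hw0 n)

lemma balancedSum_le_two_mul_sum (hw0 : ∀ n, 0 ≤ w n) (v : ι →₀ E) :
    balancedSum w (fun n => p n) v ≤ 2 * v.sum fun n => p n := by
  have hS := sum_seminorm_nonneg p v
  rw [balancedSum, two_mul]
  gcongr with n
  exact max_le (apply_nonneg _ _) (sub_le_self _ (mul_nonneg (hw0 n) hS))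

lemma abs_sub_mul_sum_le_balancedSum_sub_sum (hw0 : ∀ n, 0 ≤ w n)
    (hw1 : ∀ s : Finset ι, ∑ n ∈ s, w n ≤ 1) (v : ι →₀ E) (k : ι) :
    |p k (v k) - w k * v.sum fun n => p n| ≤
      balancedSum w (fun n => p n) v - v.sum fun n => p n := by
  classical
  obtain ⟨s, hk, hsub⟩ : ∃ s : Finset ι, k ∈ s ∧ v.support ⊆ s :=
    ⟨insert k v.support, Finset.mem_insert_self .., Finset.subset_insert ..⟩
  have hsum : p k (v k) + ∑ n ∈ s.erase k, p n (v n) = v.sum fun n => p n := by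
    rw [Finset.add_sum_erase s (fun n => p n (v n)) hk]
    exact (Finsupp.sum_of_support_subset v hsub _ fun n _ => map_zero (p n)).symm
  have htail : 0 ≤ (1 - ∑ n ∈ s, w n) * v.sum fun n => p n :=
    mul_nonneg (sub_nonneg.2 (hw1 s)) (sum_seminorm_nonneg p v)
  rw [balancedSum_eq_sum_max p hw0 hsub, ← Finset.add_sum_erase s _ hk]
  rw [← Finset.add_sum_erase s w hk] at htail ⊢
  set S := v.sum fun n => p n
  have hge_share : (∑ n ∈ s.erase k, w n) * S ≤ ∑ n ∈ s.erase k, max (w n * S) (p n (v n)) := by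
    rw [Finset.sum_mul]
    exact Finset.sum_le_sum fun n _ => le_max_left _ _
  have hge_term : ∑ n ∈ s.erase k, p n (v n) ≤ ∑ n ∈ s.erase k, max (w n * S) (p n (v n)) :=
    Finset.sum_le_sum fun n _ => le_max_right _ _
  have hk_share := le_max_left (w k * S) (p k (v k))
  have hk_term := le_max_right (w k * S) (p k (v k))
  rw [abs_le]
  constructor <;> linarith

end BalancedSum

section AttainsNorm

/-- `F` attains the norm `1` in the completion with respect to `p`: the condition defining `Yset`,
for real-valued `p` and `F` on an arbitrary group. -/
def AttainsNorm {E : Type*} [Sub E] (p F : E → ℝ) : Prop :=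
  ∃ v : ℕ → E, Tendsto (fun ij : ℕ × ℕ => p (v ij.1 - v ij.2)) (atTop ×ˢ atTop) (𝓝 0) ∧
    Tendsto (fun k => p (v k)) atTop (𝓝 1) ∧ Tendsto (fun k => F (v k)) atTop (𝓝 1)

lemma attainsNorm_comp_addEquiv {E E' : Type*} [AddGroup E] [AddGroup E'] (e : E ≃+ E')
    {p F : E' → ℝ} : AttainsNorm (p ∘ e) (F ∘ e) ↔ AttainsNorm p F := by
  constructor
  · rintro ⟨v, hv⟩
    exact ⟨e ∘ v, by simpa using hv⟩
  · rintro ⟨v, hv⟩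
    exact ⟨e.symm ∘ v, by simpa using hv⟩

lemma attainsNorm_of_le_one {E : Type*} [Sub E] {p F : E → ℝ} (hF : ∀ x, F x ≤ p x) {v : ℕ → E}
    (hcauchy : Tendsto (fun ij : ℕ × ℕ => p (v ij.1 - v ij.2)) (atTop ×ˢ atTop) (𝓝 0))
    (hp : ∀ k, p (v k) ≤ 1) (hFv : Tendsto (fun k => F (v k)) atTop (𝓝 1)) : AttainsNorm p F :=
  ⟨v, hcauchy, tendsto_of_tendsto_of_tendsto_of_le_of_le hFv tendsto_const_nhds
    (fun k => hF (v k)) hp, hFv⟩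

lemma exists_ratCast_tendsto_of_lt {a : ℕ → ℝ} {L : ℝ} (ha : Tendsto a atTop (𝓝 L)) :
    ∃ r : ℕ → ℚ, (∀ k, a k < r k) ∧ Tendsto (fun k => (r k : ℝ)) atTop (𝓝 L) := by
  choose r har hra using fun k : ℕ =>
    exists_rat_btwn (lt_add_of_pos_right (a k) (Nat.one_div_pos_of_nat (α := ℝ) (n := k)))
  have hupper : Tendsto (fun k : ℕ => a k + 1 / ((k : ℝ) + 1)) atTop (𝓝 L) := by
    simpa only [add_zero] using ha.add tendsto_one_div_add_atTop_nhds_zero_nat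
  exact ⟨r, har, tendsto_of_tendsto_of_tendsto_of_le_of_le ha hupper
    (fun k => (har k).le) fun k => (hra k).le⟩

lemma norm_rat_of_nonneg {q : ℚ} (hq : 0 ≤ q) : ‖q‖ = q := by
  rw [← Rat.norm_cast_real, Real.norm_of_nonneg (by exact_mod_cast hq)]

variable {E : Type*} [AddCommGroup E] [Module ℚ E]

lemma tendsto_seminorm_sub_of_close {p : Seminorm ℚ E} {u v : ℕ → E}
    (hv : Tendsto (fun ij : ℕ × ℕ => p (v ij.1 - v ij.2)) (atTop ×ˢ atTop) (𝓝 0))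
    (huv : Tendsto (fun k => p (v k - u k)) atTop (𝓝 0)) :
    Tendsto (fun ij : ℕ × ℕ => p (u ij.1 - u ij.2)) (atTop ×ˢ atTop) (𝓝 0) := by
  have hsum : Tendsto (fun ij : ℕ × ℕ => p (v ij.1 - u ij.1) + p (v ij.1 - v ij.2) +
      p (v ij.2 - u ij.2)) (atTop ×ˢ atTop) (𝓝 0) := by
    simpa only [add_zero, Function.comp_def] using
      ((huv.comp tendsto_fst).add hv).add (huv.comp tendsto_snd)
  refine squeeze_zero (fun _ => apply_nonneg _ _) (fun ij => ?_) hsum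
  calc p (u ij.1 - u ij.2)
      = p (-(v ij.1 - u ij.1) + (v ij.1 - v ij.2) + (v ij.2 - u ij.2)) := by congr 1; abel
    _ ≤ p (-(v ij.1 - u ij.1)) + p (v ij.1 - v ij.2) + p (v ij.2 - u ij.2) :=
      (map_add_le_add p _ _).trans (by gcongr; exact map_add_le_add p _ _)
    _ = _ := by rw [map_neg_eq_map]

lemma seminorm_sub_inv_smul_le {p : Seminorm ℚ E} {x : E} {r : ℚ} (hr : p x < r) :
    p (x - r⁻¹ • x) ≤ |(r : ℝ) - 1| := by
  have hr0 : (0 : ℝ) < r := (apply_nonneg p x).trans_lt hr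
  calc p (x - r⁻¹ • x) = p ((1 - r⁻¹) • x) := by rw [sub_smul, one_smul]
    _ = |1 - (r : ℝ)⁻¹| * p x := by
      rw [map_smul_eq_mul, ← Rat.norm_cast_real, Real.norm_eq_abs]
      push_cast
      rfl
    _ ≤ |1 - (r : ℝ)⁻¹| * r := by gcongr
    _ = |(r : ℝ) - 1| := by
      nth_rw 2 [← abs_of_pos hr0]
      rw [← abs_mul, sub_mul, one_mul, inv_mul_cancel₀ hr0.ne']

lemma AttainsNorm.exists_le_one {p : Seminorm ℚ E} {F : E →ₗ[ℚ] ℝ} (hF : ∀ x, |F x| ≤ p x)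
    (h : AttainsNorm p F) :
    ∃ v : ℕ → E, Tendsto (fun ij : ℕ × ℕ => p (v ij.1 - v ij.2)) (atTop ×ˢ atTop) (𝓝 0) ∧
      (∀ k, p (v k) ≤ 1) ∧ Tendsto (fun k => F (v k)) atTop (𝓝 1) := by
  obtain ⟨v, hcauchy, hp, hFv⟩ := h
  obtain ⟨r, hpr, hr⟩ := exists_ratCast_tendsto_of_lt hp
  have hclose : Tendsto (fun k => p (v k - (r k)⁻¹ • v k)) atTop (𝓝 0) := by
    have hr1 : Tendsto (fun k => |(r k : ℝ) - 1|) atTop (𝓝 0) := by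
      simpa only [sub_self, abs_zero] using (hr.sub_const 1).abs
    exact squeeze_zero (fun _ => apply_nonneg _ _)
      (fun k => seminorm_sub_inv_smul_le (hpr k)) hr1
  have hFclose : Tendsto (fun k => F (v k - (r k)⁻¹ • v k)) atTop (𝓝 0) :=
    squeeze_zero_norm (fun k => hF _) hclose
  refine ⟨fun k => (r k)⁻¹ • v k, tendsto_seminorm_sub_of_close hcauchy hclose, fun k => ?_, ?_⟩
  · have hr0 : (0 : ℝ) ≤ r k := (apply_nonneg p (v k)).trans (hpr k).le
    rw [map_smul_eq_mul, norm_inv, norm_rat_of_nonneg (by exact_mod_cast hr0)]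
    exact inv_mul_le_one_of_le₀ (hpr k).le hr0
  · simpa only [map_sub, sub_sub_cancel, sub_zero] using hFv.sub hFclose

end AttainsNorm

section Summation

lemma tendsto_finsuppSum_of_dominated {ι α E : Type*} [Zero E] {l : Filter α} {f : ι → E → ℝ}
    (hf : ∀ n, f n 0 = 0) {u : α → ι →₀ E} {g bound : ι → ℝ} (hbound : Summable bound)
    (hle : ∀ i n, |f n (u i n)| ≤ bound n)
    (hlim : ∀ n, Tendsto (fun i => f n (u i n)) l (𝓝 (g n))) :
    Tendsto (fun i => (u i).sum f) l (𝓝 (∑' n, g n)) := by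
  have hsum (i : α) : (u i).sum f = ∑' n, f n (u i n) :=
    (tsum_eq_sum fun n hn => by rw [Finsupp.notMem_support_iff.1 hn, hf]).symm
  simp only [hsum]
  exact tendsto_tsum_of_dominated_convergence hbound hlim (Eventually.of_forall hle)

variable {E : Type*} [AddCommGroup E] [Module ℚ E]

lemma tendsto_apply_of_balancedSum {ι α : Type*} {l : Filter α} {p : ι → Seminorm ℚ E}
    {F : ι → E →ₗ[ℚ] ℝ} (hF : ∀ n x, |F n x| ≤ p n x) {w : ι → ℝ} (hw0 : ∀ n, 0 ≤ w n)
    (hw1 : ∀ s : Finset ι, ∑ n ∈ s, w n ≤ 1) {u : α → ι →₀ E}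
    (hN : Tendsto (fun j => balancedSum w (fun n => p n) (u j)) l (𝓝 1))
    (hFu : Tendsto (fun j => (u j).sum fun n => F n) l (𝓝 1)) (k : ι) :
    Tendsto (fun j => p k (u j k)) l (𝓝 (w k)) ∧ Tendsto (fun j => F k (u j k)) l (𝓝 (w k)) := by
  have hgap_nonneg (n : ι) (x : E) : 0 ≤ p n x - F n x :=
    sub_nonneg.2 ((le_abs_self _).trans (hF n x))
  have hS : Tendsto (fun j => (u j).sum fun n => p n) l (𝓝 1) :=
    tendsto_of_tendsto_of_tendsto_of_le_of_le hFu hN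
      (fun j => Finset.sum_le_sum fun n _ => sub_nonneg.1 (hgap_nonneg n _))
      (fun j => sum_le_balancedSum _ _ _)
  have hdev : Tendsto (fun j => p k (u j k) - w k * (u j).sum fun n => p n) l (𝓝 0) :=
    squeeze_zero_norm (fun j => abs_sub_mul_sum_le_balancedSum_sub_sum p hw0 hw1 (u j) k)
      (by simpa only [sub_self] using hN.sub hS)
  have hp : Tendsto (fun j => p k (u j k)) l (𝓝 (w k)) := by
    simpa only [sub_add_cancel, mul_one, zero_add] using hdev.add (hS.const_mul (w k))
  have hgap : Tendsto (fun j => p k (u j k) - F k (u j k)) l (𝓝 0) := by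
    refine squeeze_zero (fun j => hgap_nonneg k _) (fun j => ?_)
      (by simpa only [sub_self] using hS.sub hFu)
    rw [← Finsupp.sum_sub]
    exact apply_le_finsuppSum (f := fun n x => p n x - F n x) (fun n => by simp) hgap_nonneg
      (u j) k
  exact ⟨hp, by simpa only [sub_sub_cancel, sub_zero] using hp.sub hgap⟩

variable {p : ℕ → Seminorm ℚ E} {F : ℕ → E →ₗ[ℚ] ℝ} {w : ℕ → ℚ}

lemma AttainsNorm.of_balancedSum (hw0 : ∀ n, 0 < w n) (hw1 : HasSum (fun n => (w n : ℝ)) 1)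
    (hF : ∀ n x, |F n x| ≤ p n x)
    (h : AttainsNorm (balancedSum (fun n => (w n : ℝ)) fun n => p n)
      fun v => v.sum fun n => F n) (k : ℕ) : AttainsNorm (p k) (F k) := by
  obtain ⟨u, hcauchy, hN, hFu⟩ := h
  have hw0' (n : ℕ) : 0 ≤ (w n : ℝ) := by exact_mod_cast (hw0 n).le
  have hwk : (w k : ℝ) ≠ 0 := by exact_mod_cast (hw0 k).ne'
  obtain ⟨hp, hFk⟩ := tendsto_apply_of_balancedSum hF hw0'
    (fun s => sum_le_hasSum s (fun n _ => hw0' n) hw1) hN hFu k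
  have hcauchy_k : Tendsto (fun ij : ℕ × ℕ => p k (u ij.1 k - u ij.2 k)) (atTop ×ˢ atTop) (𝓝 0) :=
    squeeze_zero (fun _ => apply_nonneg _ _) (fun ij => (apply_le_finsuppSum
      (fun n => map_zero (p n)) (fun n => apply_nonneg (p n)) (u ij.1 - u ij.2) k).trans
      (sum_le_balancedSum _ _ _)) hcauchy
  have hnorm : ‖(w k)⁻¹‖ = (w k : ℝ)⁻¹ := by rw [norm_inv, norm_rat_of_nonneg (hw0 k).le]
  refine ⟨fun j => (w k)⁻¹ • u j k, ?_, ?_, ?_⟩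
  · simpa only [← smul_sub, map_smul_eq_mul, mul_zero] using hcauchy_k.const_mul ‖(w k)⁻¹‖
  · simpa only [map_smul_eq_mul, hnorm, inv_mul_cancel₀ hwk] using hp.const_mul (w k : ℝ)⁻¹
  · simpa only [map_smul, Rat.smul_def, Rat.cast_inv, inv_mul_cancel₀ hwk] using
      hFk.const_mul (w k : ℝ)⁻¹

/-- The finitely supported family with entries `w n • v n j` for `n < j`. If `v n` witnesses that
the `n`-th functional attains its norm, then these families, as `j` varies, do so for the sum. -/
noncomputable def truncatedCombination (w : ℕ → ℚ) (v : ℕ → ℕ → E) (j : ℕ) : ℕ →₀ E :=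
  Finsupp.indicator (Finset.range j) fun n _ => w n • v n j

lemma truncatedCombination_apply (w : ℕ → ℚ) (v : ℕ → ℕ → E) (j n : ℕ) :
    truncatedCombination w v j n = if n < j then w n • v n j else 0 := by
  simp [truncatedCombination, Finsupp.indicator_apply]

lemma eventually_truncatedCombination_apply (w : ℕ → ℚ) (v : ℕ → ℕ → E) (n : ℕ) :
    ∀ᶠ j in atTop, truncatedCombination w v j n = w n • v n j :=
  (eventually_gt_atTop n).mono fun j hj => by rw [truncatedCombination_apply, if_pos hj]

lemma seminorm_truncatedCombination_le (hw0 : ∀ n, 0 ≤ w n) {v : ℕ → ℕ → E}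
    (hv : ∀ n j, p n (v n j) ≤ 1) (j n : ℕ) : p n (truncatedCombination w v j n) ≤ w n := by
  have hwn : (0 : ℝ) ≤ w n := by exact_mod_cast hw0 n
  rw [truncatedCombination_apply]
  split_ifs
  · rw [map_smul_eq_mul, norm_rat_of_nonneg (hw0 n)]
    exact mul_le_of_le_one_right hwn (hv n j)
  · rwa [map_zero]

lemma tendsto_sum_truncatedCombination (hw0 : ∀ n, 0 ≤ w n)
    (hw1 : HasSum (fun n => (w n : ℝ)) 1) (hF : ∀ n x, |F n x| ≤ p n x) {v : ℕ → ℕ → E}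
    (hv : ∀ n j, p n (v n j) ≤ 1) (hFv : ∀ n, Tendsto (fun j => F n (v n j)) atTop (𝓝 1)) :
    Tendsto (fun j => (truncatedCombination w v j).sum fun n => F n) atTop (𝓝 1) := by
  rw [← hw1.tsum_eq]
  refine tendsto_finsuppSum_of_dominated (fun n => map_zero (F n)) hw1.summable
    (fun j n => (hF n _).trans (seminorm_truncatedCombination_le hw0 hv j n)) fun n => ?_
  have hlim : Tendsto (fun j => F n (w n • v n j)) atTop (𝓝 (w n)) := by
    simpa only [map_smul, Rat.smul_def, mul_one] using (hFv n).const_mul (w n : ℝ)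
  exact hlim.congr' ((eventually_truncatedCombination_apply w v n).mono fun j hj =>
    congrArg (F n) hj.symm)

lemma tendsto_sum_truncatedCombination_sub (hw0 : ∀ n, 0 ≤ w n)
    (hw1 : Summable fun n => (w n : ℝ)) {v : ℕ → ℕ → E} (hv : ∀ n j, p n (v n j) ≤ 1)
    (hcauchy : ∀ n, Tendsto (fun ij : ℕ × ℕ => p n (v n ij.1 - v n ij.2)) (atTop ×ˢ atTop) (𝓝 0)) :
    Tendsto (fun ij : ℕ × ℕ => (truncatedCombination w v ij.1 -
      truncatedCombination w v ij.2).sum fun n => p n) (atTop ×ˢ atTop) (𝓝 0) := by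
  rw [← tsum_zero (α := ℝ) (β := ℕ)]
  refine tendsto_finsuppSum_of_dominated (fun n => map_zero (p n)) (hw1.add hw1)
    (fun ij n => ?_) fun n => ?_
  · rw [abs_of_nonneg (apply_nonneg _ _), Finsupp.sub_apply]
    exact (map_sub_le_add (p n) _ _).trans (add_le_add
      (seminorm_truncatedCombination_le hw0 hv _ _) (seminorm_truncatedCombination_le hw0 hv _ _))
  · have hlim : Tendsto (fun ij : ℕ × ℕ => p n (w n • v n ij.1 - w n • v n ij.2))
        (atTop ×ˢ atTop) (𝓝 0) := by
      simpa only [← smul_sub, map_smul_eq_mul, mul_zero] using (hcauchy n).const_mul ‖w n‖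
    have heq := eventually_truncatedCombination_apply w v n
    exact hlim.congr' ((heq.prod_mk heq).mono fun ij hij => by
      simp only [Finsupp.sub_apply, hij.1, hij.2])

lemma attainsNorm_balancedSum (hw0 : ∀ n, 0 ≤ w n) (hw1 : HasSum (fun n => (w n : ℝ)) 1)
    (hF : ∀ n x, |F n x| ≤ p n x) (h : ∀ n, AttainsNorm (p n) (F n)) :
    AttainsNorm (balancedSum (fun n => (w n : ℝ)) fun n => p n) fun v => v.sum fun n => F n := by
  choose v hcauchy hv hFv using fun n => (h n).exists_le_one (hF n)
  have hw0' (n : ℕ) : 0 ≤ (w n : ℝ) := by exact_mod_cast hw0 n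
  refine attainsNorm_of_le_one (v := truncatedCombination w v) (fun u => ?_) ?_ (fun j => ?_)
    (tendsto_sum_truncatedCombination hw0 hw1 hF hv hFv)
  · exact (Finset.sum_le_sum fun n _ => (le_abs_self _).trans (hF n _)).trans
      (sum_le_balancedSum _ _ _)
  · refine squeeze_zero (fun ij => (sum_seminorm_nonneg p _).trans (sum_le_balancedSum _ _ _))
      (fun ij => balancedSum_le_two_mul_sum p hw0' _) ?_
    simpa only [mul_zero] using
      (tendsto_sum_truncatedCombination_sub hw0 hw1.summable hv hcauchy).const_mul 2
  · refine balancedSum_le_of_forall_le hw0' (fun s => sum_le_hasSum s (fun n _ => hw0' n) hw1)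
      zero_le_one fun n => ?_
    rw [mul_one]
    exact seminorm_truncatedCombination_le hw0 hv j n

end Summation

section RationalNorms

lemma tendsto_ratCast_iff {α : Type*} {l : Filter α} {u : α → ℚ} {a : ℚ} :
    Tendsto (fun i => (u i : ℝ)) l (𝓝 (a : ℝ)) ↔ ∀ ε : ℚ, 0 < ε → ∀ᶠ i in l, |u i - a| < ε := by
  rw [Metric.tendsto_nhds]
  refine ⟨fun h ε hε => (h ε (by exact_mod_cast hε)).mono fun i hi => ?_, fun h ε hε => ?_⟩
  · rw [Real.dist_eq] at hi
    exact_mod_cast hi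
  · obtain ⟨δ, hδ, hδε⟩ := exists_pos_rat_lt hε
    refine (h δ hδ).mono fun i hi => lt_trans ?_ hδε
    rw [Real.dist_eq]
    exact_mod_cast hi

lemma isCauchyWrt_iff_tendsto {p : (ℕ →₀ ℚ) → ℚ} (hp : ∀ v, 0 ≤ p v) {v : ℕ → ℕ →₀ ℚ} :
    IsCauchyWrt p v ↔
      Tendsto (fun ij : ℕ × ℕ => (p (v ij.1 - v ij.2) : ℝ)) (atTop ×ˢ atTop) (𝓝 0) := by
  rw [← Rat.cast_zero, tendsto_ratCast_iff]
  simp only [prod_atTop_atTop_eq, eventually_atTop_prod_self, sub_zero, abs_of_nonneg (hp _),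
    IsCauchyWrt]

/-- The norm component of a point of `X` as a Mathlib seminorm, for which values must be real. -/
noncomputable def Xspace.seminorm (x : Xspace) : Seminorm ℚ (ℕ →₀ ℚ) :=
  Seminorm.of (fun v => (x.val.1 v : ℝ))
    (fun v w => by exact_mod_cast x.property.1.add_le v w)
    (fun q v => by
      rw [x.property.1.smul_eq, Rat.cast_mul, Rat.cast_abs, ← Real.norm_eq_abs,
        Rat.norm_cast_real])

/-- The functional component of a point of `X`, with values in `ℝ` to match `Xspace.seminorm`. -/
noncomputable def Xspace.functional (x : Xspace) : (ℕ →₀ ℚ) →ₗ[ℚ] ℝ :=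
  Algebra.linearMap ℚ ℝ ∘ₗ x.property.2.1.mk' _

lemma Xspace.abs_functional_le (x : Xspace) (v : ℕ →₀ ℚ) : |x.functional v| ≤ x.seminorm v := by
  change |((x.val.2 v : ℚ) : ℝ)| ≤ (x.val.1 v : ℝ)
  exact_mod_cast x.property.2.2 v

lemma mem_Yset_iff_attainsNorm {x : Xspace} :
    x ∈ Yset ↔ AttainsNorm x.seminorm x.functional := by
  have htendsto (u : ℕ → ℚ) : (∀ ε : ℚ, 0 < ε → ∃ K, ∀ k, K ≤ k → |u k - 1| < ε) ↔
      Tendsto (fun k => (u k : ℝ)) atTop (𝓝 1) := by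
    rw [← Rat.cast_one (α := ℝ), tendsto_ratCast_iff]
    simp only [eventually_atTop]
  refine exists_congr fun v => ?_
  rw [isCauchyWrt_iff_tendsto x.property.1.nonneg, htendsto, htendsto]
  rfl

end RationalNorms

section Glue

/-- The weights `1/2, 1/4, 1/8, …`, a positive rational series with sum `1`. -/
def dyadicWeight (n : ℕ) : ℚ := 1 / 2 / 2 ^ n

lemma dyadicWeight_pos (n : ℕ) : 0 < dyadicWeight n := by
  unfold dyadicWeight
  positivity

lemma dyadicWeight_cast_nonneg (n : ℕ) : 0 ≤ (dyadicWeight n : ℝ) := by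
  exact_mod_cast (dyadicWeight_pos n).le

lemma hasSum_dyadicWeight : HasSum (fun n => (dyadicWeight n : ℝ)) 1 := by
  simpa [dyadicWeight] using hasSum_geometric_two' 1

lemma sum_dyadicWeight_le_one (s : Finset ℕ) : ∑ n ∈ s, (dyadicWeight n : ℝ) ≤ 1 :=
  sum_le_hasSum s (fun n _ => dyadicWeight_cast_nonneg n) hasSum_dyadicWeight

/-- `N` as the direct sum of countably many copies of itself, by splitting `ℕ` into the blocks
of a pairing `ℕ ≃ ℕ × ℕ`. -/
noncomputable def blockEquiv : (ℕ →₀ ℚ) ≃ₗ[ℚ] (ℕ →₀ ℕ →₀ ℚ) :=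
  Finsupp.domLCongr Nat.pairEquiv.symm ≪≫ₗ Finsupp.curryLinearEquiv ℚ

/-- The norm on `N` combining the norms of a sequence in `X`, the `n`-th one living on block `n`. -/
noncomputable def glueNorm (x : ℕ → Xspace) (v : ℕ →₀ ℚ) : ℚ :=
  balancedSum dyadicWeight (fun n => (x n).val.1) (blockEquiv v)

/-- The functional on `N` that on block `n` is the functional of the `n`-th member of a sequence
in `X`. -/
noncomputable def glueFunctional (x : ℕ → Xspace) (v : ℕ →₀ ℚ) : ℚ :=
  (blockEquiv v).sum fun n => (x n).val.2

lemma ratCast_glueNorm (x : ℕ → Xspace) (v : ℕ →₀ ℚ) :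
    (glueNorm x v : ℝ) =
      balancedSum (fun n => (dyadicWeight n : ℝ)) (fun n => (x n).seminorm) (blockEquiv v) :=
  ratCast_balancedSum ..

lemma ratCast_glueFunctional (x : ℕ → Xspace) (v : ℕ →₀ ℚ) :
    (glueFunctional x v : ℝ) = (blockEquiv v).sum fun n => (x n).functional :=
  Rat.cast_sum ..

lemma apply_blockEquiv_le_glueNorm (x : ℕ → Xspace) (v : ℕ →₀ ℚ) (n : ℕ) :
    (x n).val.1 (blockEquiv v n) ≤ glueNorm x v := by
  have h := (apply_le_finsuppSum (fun k => map_zero (x k).seminorm)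
    (fun k => apply_nonneg (x k).seminorm) (blockEquiv v) n).trans
    (sum_le_balancedSum (fun k => (dyadicWeight k : ℝ)) _ _)
  rw [← ratCast_glueNorm] at h
  exact Rat.cast_le.1 h

lemma isRatNorm_glueNorm (x : ℕ → Xspace) : IsRatNorm (glueNorm x) where
  nonneg v := ((x 0).property.1.nonneg _).trans (apply_blockEquiv_le_glueNorm x v 0)
  eq_zero_iff v := by
    constructor
    · intro h
      refine (LinearEquiv.map_eq_zero_iff blockEquiv).1 (Finsupp.ext fun n => ?_)
      have hnorm := (x n).property.1
      refine (hnorm.eq_zero_iff _).1 (le_antisymm ?_ (hnorm.nonneg _))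
      exact (apply_blockEquiv_le_glueNorm x v n).trans_eq h
    · rintro rfl
      simp [glueNorm, balancedSum]
  smul_eq q v := by
    have h := balancedSum_smul (fun n => (x n).seminorm) dyadicWeight_cast_nonneg q (blockEquiv v)
    rw [← map_smul, ← ratCast_glueNorm, ← ratCast_glueNorm, ← Rat.norm_cast_real,
      Real.norm_eq_abs] at h
    exact_mod_cast h
  add_le v w := by
    have h := balancedSum_add_le (fun n => (x n).seminorm) dyadicWeight_cast_nonneg
      sum_dyadicWeight_le_one (blockEquiv v) (blockEquiv w)
    rw [← map_add] at h
    simp only [← ratCast_glueNorm] at h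
    exact_mod_cast h

lemma isLinearMap_glueFunctional (x : ℕ → Xspace) : IsLinearMap ℚ (glueFunctional x) :=
  (Finsupp.lsum ℚ (fun n => (x n).property.2.1.mk' _) ∘ₗ blockEquiv.toLinearMap).isLinear

lemma abs_glueFunctional_le (x : ℕ → Xspace) (v : ℕ →₀ ℚ) :
    |glueFunctional x v| ≤ glueNorm x v :=
  calc |glueFunctional x v| ≤ (blockEquiv v).sum fun n => (x n).val.1 :=
        (Finset.abs_sum_le_sum_abs _ _).trans (Finset.sum_le_sum fun n _ => (x n).property.2.2 _)
    _ ≤ glueNorm x v := le_add_of_nonneg_right (Finsupp.sum_nonneg' fun _ => le_max_left _ _)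

/-- The point of `X` assembled from a sequence in `X`, the map turning reductions of the sets `C n`
into one of their intersection. -/
noncomputable def glue (x : ℕ → Xspace) : Xspace :=
  ⟨(glueNorm x, glueFunctional x), isRatNorm_glueNorm x, isLinearMap_glueFunctional x,
    abs_glueFunctional_le x⟩

instance : DiscreteTopology ℚ := ⟨rfl⟩

lemma continuous_glue : Continuous glue := by
  have hp (n : ℕ) (v : ℕ →₀ ℚ) : Continuous fun x : ℕ → Xspace => (x n).val.1 v :=
    (continuous_apply v).comp
      (continuous_fst.comp (continuous_subtype_val.comp (continuous_apply n)))
  have hF (n : ℕ) (v : ℕ →₀ ℚ) : Continuous fun x : ℕ → Xspace => (x n).val.2 v :=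
    (continuous_apply v).comp
      (continuous_snd.comp (continuous_subtype_val.comp (continuous_apply n)))
  refine Continuous.subtype_mk ((continuous_pi fun v => ?_).prodMk (continuous_pi fun v => ?_)) _
  · have hsum : Continuous fun x : ℕ → Xspace => (blockEquiv v).sum fun n => (x n).val.1 :=
      continuous_finsetSum _ fun n _ => hp n _
    exact hsum.add (continuous_finsetSum _ fun n _ =>
      (continuous_of_discreteTopology (f := max 0)).comp
        ((hp n _).sub (continuous_const.mul hsum)))
  · exact continuous_finsetSum _ fun n _ => hF n _

lemma glue_mem_Yset_iff {x : ℕ → Xspace} : glue x ∈ Yset ↔ ∀ n, x n ∈ Yset := by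
  have hglue : glue x ∈ Yset ↔
      AttainsNorm (balancedSum (fun n => (dyadicWeight n : ℝ)) fun n => (x n).seminorm)
        fun v => v.sum fun n => (x n).functional := by
    rw [mem_Yset_iff_attainsNorm, ← attainsNorm_comp_addEquiv blockEquiv.toAddEquiv]
    have hp : ⇑(glue x).seminorm = _ := funext (ratCast_glueNorm x)
    have hF : ⇑(glue x).functional = _ := funext (ratCast_glueFunctional x)
    rw [hp, hF]
    rfl
  have hle (n : ℕ) := (x n).abs_functional_le
  simp only [hglue, mem_Yset_iff_attainsNorm]
  exact ⟨fun h => h.of_balancedSum dyadicWeight_pos hasSum_dyadicWeight hle,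
    attainsNorm_balancedSum (fun n => (dyadicWeight_pos n).le) hasSum_dyadicWeight hle⟩

end Glue

/-- The class of subsets of Baire space continuously reducible to `Y` is closed under
countable intersections. -/
theorem stmt9 (C : ℕ → Set (ℕ → ℕ)) (hC : ∀ n, ContReducibleToY (C n)) :
    ContReducibleToY (⋂ n, C n) := by
  choose φ hφ hmem using hC
  refine ⟨fun x => glue fun n => φ n x, continuous_glue.comp (continuous_pi hφ), fun x => ?_⟩
  simp only [Set.mem_iInter, hmem, glue_mem_Yset_iff]
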